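/- (Theorem 3.1, first part.) The convex Blaschke–Santaló diagram 𝓔ᶜ := { (|Ω|·λ₁(Ω), |Ω|·μ₁(Ω)) : Ω ⊆ ℝ² nonempty bounded open convex } is a closed subset of ℝ². -/

import Mathlib

open MeasureTheory Filter Set Real RealInnerProductSpace

noncomputable section

abbrev E2 : Type := EuclideanSpace ℝ (Fin 2)

/-- First Dirichlet eigenvalue, variational characterization. -/
noncomputable def dEig1 (Ω : Set E2) : ℝ :=
  sInf { R : ℝ | ∃ u : E2 → ℝ, ContDiff ℝ (⊤ : ℕ∞) u ∧ HasCompactSupport u ∧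
    tsupport u ⊆ Ω ∧ (∫ x, (u x)^2) ≠ 0 ∧
    R = (∫ x, ‖fderiv ℝ u x‖^2) / (∫ x, (u x)^2) }

/-- First nontrivial Neumann eigenvalue, variational characterization. -/
noncomputable def nEig1 (Ω : Set E2) : ℝ :=
  sInf { R : ℝ | ∃ u : E2 → ℝ, ContDiff ℝ (⊤ : ℕ∞) u ∧ (∫ x in Ω, u x) = 0 ∧
    (∫ x in Ω, (u x)^2) ≠ 0 ∧
    R = (∫ x in Ω, ‖fderiv ℝ u x‖^2) / (∫ x in Ω, (u x)^2) }

/-- The open unit disc in the plane. -/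
def unitDisc : Set E2 := Metric.ball 0 1

/-- The Blaschke–Santaló diagram 𝓔ᶜ for bounded open convex sets. -/
def diagEC : Set (ℝ × ℝ) :=
  { p | ∃ Ω : Set E2, Ω.Nonempty ∧ IsOpen Ω ∧ Bornology.IsBounded Ω ∧ Convex ℝ Ω ∧
      p = ((volume Ω).toReal * dEig1 Ω, (volume Ω).toReal * nEig1 Ω) }

/-! ### Change of variables -/

lemma integral_affine (a : E2) {k : ℝ} (hk : 0 < k) (f : E2 → ℝ) :
    ∫ x, f (a + k • x) = (k ^ 2)⁻¹ * ∫ x, f x := by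
  have h1 := Measure.integral_comp_smul_of_nonneg (volume : Measure E2) (fun y => f (a + y)) k
    (hR := hk.le)
  rw [h1, integral_add_left_eq_self (μ := (volume : Measure E2)) f a]
  simp

lemma setIntegral_affine (a : E2) {k : ℝ} (hk : 0 < k) (f : E2 → ℝ) {Ω : Set E2}
    (hΩ : MeasurableSet Ω) :
    ∫ x in (fun x => a + k • x) ⁻¹' Ω, f (a + k • x) = (k ^ 2)⁻¹ * ∫ x in Ω, f x := by
  have hm : Measurable (fun x : E2 => a + k • x) := by fun_prop
  rw [← integral_indicator hΩ, ← integral_indicator (hm hΩ), ← integral_affine a hk]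
  rfl

lemma volume_affine (a : E2) {k : ℝ} (hk : 0 < k) {Ω : Set E2}
    (hΩ : MeasurableSet Ω) :
    (volume ((fun x => a + k • x) ⁻¹' Ω)).toReal = (k ^ 2)⁻¹ * (volume Ω).toReal := by
  have := setIntegral_affine a hk (fun _ => 1) hΩ
  simpa [Measure.real] using this

/-! ### The test sets -/

def dSet (Ω : Set E2) : Set ℝ :=
  { R : ℝ | ∃ u : E2 → ℝ, ContDiff ℝ (⊤ : ℕ∞) u ∧ HasCompactSupport u ∧
    tsupport u ⊆ Ω ∧ (∫ x, (u x)^2) ≠ 0 ∧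
    R = (∫ x, ‖fderiv ℝ u x‖^2) / (∫ x, (u x)^2) }

def nSet (Ω : Set E2) : Set ℝ :=
  { R : ℝ | ∃ u : E2 → ℝ, ContDiff ℝ (⊤ : ℕ∞) u ∧ (∫ x in Ω, u x) = 0 ∧
    (∫ x in Ω, (u x)^2) ≠ 0 ∧
    R = (∫ x in Ω, ‖fderiv ℝ u x‖^2) / (∫ x in Ω, (u x)^2) }

lemma dEig1_eq (Ω : Set E2) : dEig1 Ω = sInf (dSet Ω) := rfl
lemma nEig1_eq (Ω : Set E2) : nEig1 Ω = sInf (nSet Ω) := rfl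

lemma dSet_nonneg {Ω : Set E2} {R : ℝ} (h : R ∈ dSet Ω) : 0 ≤ R := by
  obtain ⟨u, -, -, -, -, rfl⟩ := h
  positivity

lemma nSet_nonneg {Ω : Set E2} {R : ℝ} (h : R ∈ nSet Ω) : 0 ≤ R := by
  obtain ⟨u, -, -, -, rfl⟩ := h
  positivity

lemma dSet_bdd (Ω : Set E2) : BddBelow (dSet Ω) := ⟨0, fun _ h => dSet_nonneg h⟩
lemma nSet_bdd (Ω : Set E2) : BddBelow (nSet Ω) := ⟨0, fun _ h => nSet_nonneg h⟩

lemma dEig1_nonneg (Ω : Set E2) : 0 ≤ dEig1 Ω := Real.sInf_nonneg fun _ h => dSet_nonneg h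
lemma nEig1_nonneg (Ω : Set E2) : 0 ≤ nEig1 Ω := Real.sInf_nonneg fun _ h => nSet_nonneg h

lemma dSet_nonempty {Ω : Set E2} (hne : Ω.Nonempty) (ho : IsOpen Ω) : (dSet Ω).Nonempty := by
  obtain ⟨c, hc⟩ := hne
  obtain ⟨ε, hε, hb⟩ := Metric.isOpen_iff.1 ho c hc
  let φ : ContDiffBump c := ⟨ε / 4, ε / 2, by linarith, by linarith⟩
  refine ⟨_, φ, φ.contDiff, φ.hasCompactSupport, ?_, ?_, rfl⟩
  · rw [φ.tsupport_eq]
    exact (Metric.closedBall_subset_ball (by change ε / 2 < ε; linarith)).trans hb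
  · have : 0 < ∫ x, (φ x) ^ 2 := by
      refine Continuous.integral_pos_of_hasCompactSupport_nonneg_nonzero (x := c) ?_ ?_ ?_ ?_
      · exact φ.continuous.pow 2
      · exact φ.hasCompactSupport.comp_left (g := fun y : ℝ => y ^ 2) (by simp)
      · intro x; positivity
      · have := φ.pos_of_mem_ball (Metric.mem_ball_self (by change 0 < ε / 2; linarith))
        positivity
    exact this.ne'

lemma nSet_nonempty {Ω : Set E2} (hne : Ω.Nonempty) (ho : IsOpen Ω)
    (hb : Bornology.IsBounded Ω) : (nSet Ω).Nonempty := by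
  have hint : ∀ f : E2 → ℝ, Continuous f → IntegrableOn f Ω := fun f hf =>
    (hf.continuousOn.integrableOn_compact (hb.isCompact_closure)).mono_set subset_closure
  have hfin : volume Ω ≠ ⊤ := hb.measure_lt_top.ne
  have hpos : (volume Ω).toReal ≠ 0 :=
    (ENNReal.toReal_pos (ho.measure_pos volume hne).ne' hfin).ne'
  let c : ℝ := (∫ x in Ω, x 0) / (volume Ω).toReal
  let u : E2 → ℝ := fun x => x 0 - c
  have hu : ContDiff ℝ (⊤ : ℕ∞) u := by
    have : ContDiff ℝ (⊤ : ℕ∞) (fun x : E2 => x 0) :=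
      (EuclideanSpace.proj (𝕜 := ℝ) (0 : Fin 2) : E2 →L[ℝ] ℝ).contDiff
    exact this.sub contDiff_const
  have hc : Continuous (fun x : E2 => x 0) := by fun_prop
  refine ⟨_, u, hu, ?_, ?_, rfl⟩
  · have h2 : IntegrableOn (fun _ : E2 => c) Ω := hint _ continuous_const
    change ∫ x in Ω, (x 0 - c) = 0
    rw [integral_sub (hint _ hc) h2]
    simp only [integral_const, smul_eq_mul, c, Measure.real, Measure.restrict_apply_univ]
    field_simp
    simp
  · intro h0
    have h1 := (integral_eq_zero_iff_of_nonneg (μ := volume.restrict Ω)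
      (f := fun x => (u x) ^ 2) (fun x => by positivity) (hint _ (hu.continuous.pow 2))).1 h0
    have h2 := Measure.eqOn_open_of_ae_eq h1 ho (hu.continuous.pow 2).continuousOn
      continuousOn_const
    obtain ⟨p, hp⟩ := hne
    obtain ⟨ε, hε, hball⟩ := Metric.isOpen_iff.1 ho p hp
    have hq : p + EuclideanSpace.single 0 (ε / 2) ∈ Ω := by
      apply hball
      simp [abs_of_pos hε, show 0 < ε from hε]
    have e1 := h2 hp
    have e2 := h2 hq
    simp [u] at e1 e2
    linarith

lemma dEig1_mono {A B : Set E2} (hne : A.Nonempty) (ho : IsOpen A) (h : A ⊆ B) :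
    dEig1 B ≤ dEig1 A := by
  refine csInf_le_csInf (dSet_bdd _) (dSet_nonempty hne ho) ?_
  rintro R ⟨u, h1, h2, h3, h4⟩
  exact ⟨u, h1, h2, h3.trans h, h4⟩

lemma fderiv_affine {u : E2 → ℝ} (hu : ContDiff ℝ (⊤ : ℕ∞) u) (a : E2) {k : ℝ} (hk : 0 < k)
    (x : E2) : ‖fderiv ℝ (fun x => u (a + k • x)) x‖ ^ 2 = k ^ 2 * ‖fderiv ℝ u (a + k • x)‖ ^ 2 := by
  have hd : HasFDerivAt (fun x : E2 => a + k • x) (k • ContinuousLinearMap.id ℝ E2) x :=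
    ((hasFDerivAt_id x).const_smul k).const_add a
  have hu' : HasFDerivAt u (fderiv ℝ u (a + k • x)) (a + k • x) :=
    (hu.differentiable (by simp) _).hasFDerivAt
  have := (hu'.comp x hd).fderiv
  change fderiv ℝ (fun x => u (a + k • x)) x = _ at this
  rw [this]
  have e : (fderiv ℝ u (a + k • x)).comp (k • ContinuousLinearMap.id ℝ E2)
      = k • fderiv ℝ u (a + k • x) := by
    ext y; simp
  rw [e, norm_smul, Real.norm_of_nonneg hk.le]
  ring

lemma affine_inv (a : E2) {k : ℝ} (hk : 0 < k) (Ω : Set E2) :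
    (fun x : E2 => -(k⁻¹ • a) + k⁻¹ • x) ⁻¹' ((fun x : E2 => a + k • x) ⁻¹' Ω) = Ω := by
  ext x
  have : a + k • (-(k⁻¹ • a) + k⁻¹ • x) = x := by
    rw [smul_add, smul_neg, smul_smul, smul_smul, mul_inv_cancel₀ hk.ne']; simp
  simp only [mem_preimage, this]

lemma dEig1_affine_le (a : E2) {k : ℝ} (hk : 0 < k) {Ω : Set E2} (hne : Ω.Nonempty)
    (ho : IsOpen Ω) :
    dEig1 ((fun x : E2 => a + k • x) ⁻¹' Ω) ≤ k ^ 2 * dEig1 Ω := by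
  rw [← div_le_iff₀' (by positivity)]
  refine le_csInf (dSet_nonempty hne ho) ?_
  rintro R ⟨u, h1, h2, h3, h4, rfl⟩
  rw [div_le_iff₀' (by positivity)]
  have hc : Continuous (fun x : E2 => a + k • x) := by fun_prop
  have i1 : ∫ x, (u (a + k • x)) ^ 2 = (k ^ 2)⁻¹ * ∫ x, (u x) ^ 2 :=
    integral_affine a hk (fun x => u x ^ 2)
  have i2 : ∫ x, ‖fderiv ℝ (fun x => u (a + k • x)) x‖ ^ 2 = ∫ x, ‖fderiv ℝ u x‖ ^ 2 := by
    simp_rw [fderiv_affine h1 a hk]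
    rw [integral_const_mul, integral_affine a hk (fun x => ‖fderiv ℝ u x‖ ^ 2)]
    field_simp
  let T : E2 ≃ₜ E2 := (Homeomorph.smulOfNeZero k hk.ne').trans (Homeomorph.addLeft a)
  have hT : ∀ x, T x = a + k • x := fun x => rfl
  refine csInf_le (dSet_bdd _) ⟨fun x => u (a + k • x), ?_, ?_, ?_, ?_, ?_⟩
  · exact h1.comp (contDiff_const.add (contDiff_id.const_smul k))
  · exact h2.comp_homeomorph T
  · exact (tsupport_comp_subset_preimage u hc).trans (preimage_mono h3)
  · rw [i1]; positivity
  · rw [i1, i2]; field_simp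

lemma nEig1_affine_le (a : E2) {k : ℝ} (hk : 0 < k) {Ω : Set E2} (hne : Ω.Nonempty)
    (ho : IsOpen Ω) (hb : Bornology.IsBounded Ω) :
    nEig1 ((fun x : E2 => a + k • x) ⁻¹' Ω) ≤ k ^ 2 * nEig1 Ω := by
  rw [← div_le_iff₀' (by positivity)]
  refine le_csInf (nSet_nonempty hne ho hb) ?_
  rintro R ⟨u, h1, h3, h4, rfl⟩
  rw [div_le_iff₀' (by positivity)]
  have i1 := setIntegral_affine a hk (fun x => u x ^ 2) ho.measurableSet
  have i2 : ∫ x in (fun x : E2 => a + k • x) ⁻¹' Ω, ‖fderiv ℝ (fun x => u (a + k • x)) x‖ ^ 2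
      = ∫ x in Ω, ‖fderiv ℝ u x‖ ^ 2 := by
    simp_rw [fderiv_affine h1 a hk]
    rw [integral_const_mul, setIntegral_affine a hk (fun x => ‖fderiv ℝ u x‖ ^ 2) ho.measurableSet]
    field_simp
  refine csInf_le (nSet_bdd _) ⟨fun x => u (a + k • x), ?_, ?_, ?_, ?_⟩
  · exact h1.comp (contDiff_const.add (contDiff_id.const_smul k))
  · rw [setIntegral_affine a hk u ho.measurableSet, h3, mul_zero]
  · rw [i1]; positivity
  · rw [i1, i2]; field_simp

lemma affine_nonempty (a : E2) {k : ℝ} (hk : 0 < k) {Ω : Set E2} (hne : Ω.Nonempty) :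
    ((fun x : E2 => a + k • x) ⁻¹' Ω).Nonempty := by
  obtain ⟨y, hy⟩ := hne
  refine ⟨k⁻¹ • (y - a), ?_⟩
  simp only [mem_preimage, smul_smul, mul_inv_cancel₀ hk.ne', one_smul]
  simpa using hy

lemma affine_isOpen (a : E2) (k : ℝ) {Ω : Set E2} (ho : IsOpen Ω) :
    IsOpen ((fun x : E2 => a + k • x) ⁻¹' Ω) := ho.preimage (by fun_prop)

lemma affine_bounded (a : E2) {k : ℝ} (hk : 0 < k) {Ω : Set E2} (hb : Bornology.IsBounded Ω) :
    Bornology.IsBounded ((fun x : E2 => a + k • x) ⁻¹' Ω) := by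
  obtain ⟨R, hR⟩ := hb.exists_norm_le
  refine isBounded_iff_forall_norm_le.2 ⟨k⁻¹ * (R + ‖a‖), fun x hx => ?_⟩
  have h1 := hR _ hx
  have h2 : ‖k • x‖ ≤ R + ‖a‖ := by
    have : k • x = (a + k • x) - a := by abel
    rw [this]
    exact (norm_sub_le _ _).trans (by simpa using h1)
  rw [norm_smul, Real.norm_of_nonneg hk.le] at h2
  rw [← div_eq_inv_mul, le_div_iff₀ hk]
  linarith

lemma affine_convex (a : E2) (k : ℝ) {Ω : Set E2} (hc : Convex ℝ Ω) :
    Convex ℝ ((fun x : E2 => a + k • x) ⁻¹' Ω) := by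
  intro x hx y hy s t hs ht hst
  have := hc hx hy hs ht hst
  simp only [mem_preimage] at *
  convert this using 1
  have : a = (s + t) • a := by rw [hst, one_smul]
  nth_rewrite 1 [this]
  module

lemma dEig1_affine (a : E2) {k : ℝ} (hk : 0 < k) {Ω : Set E2} (hne : Ω.Nonempty)
    (ho : IsOpen Ω) :
    dEig1 ((fun x : E2 => a + k • x) ⁻¹' Ω) = k ^ 2 * dEig1 Ω := by
  refine le_antisymm (dEig1_affine_le a hk hne ho) ?_
  have := dEig1_affine_le (-(k⁻¹ • a)) (inv_pos.2 hk) (affine_nonempty a hk hne)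
    (affine_isOpen a k ho)
  rw [affine_inv a hk] at this
  calc _ ≤ k ^ 2 * (k⁻¹ ^ 2 * _) := mul_le_mul_of_nonneg_left this (by positivity)
    _ = _ := by field_simp

lemma nEig1_affine (a : E2) {k : ℝ} (hk : 0 < k) {Ω : Set E2} (hne : Ω.Nonempty)
    (ho : IsOpen Ω) (hb : Bornology.IsBounded Ω) :
    nEig1 ((fun x : E2 => a + k • x) ⁻¹' Ω) = k ^ 2 * nEig1 Ω := by
  refine le_antisymm (nEig1_affine_le a hk hne ho hb) ?_
  have := nEig1_affine_le (-(k⁻¹ • a)) (inv_pos.2 hk) (affine_nonempty a hk hne)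
    (affine_isOpen a k ho) (affine_bounded a hk hb)
  rw [affine_inv a hk] at this
  calc _ ≤ k ^ 2 * (k⁻¹ ^ 2 * _) := mul_le_mul_of_nonneg_left this (by positivity)
    _ = _ := by field_simp

/-- L² Cauchy–Schwarz. -/
lemma integral_cs {α : Type*} [MeasurableSpace α] {μ : Measure α} {f g : α → ℝ}
    (hf : Integrable (fun x => f x ^ 2) μ) (hg : Integrable (fun x => g x ^ 2) μ)
    (hfg : Integrable (fun x => f x * g x) μ) :
    |∫ x, f x * g x ∂μ| ≤ √(∫ x, f x ^ 2 ∂μ) * √(∫ x, g x ^ 2 ∂μ) := by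
  have key : ∀ t : ℝ, 0 ≤ (∫ x, g x ^ 2 ∂μ) * (t * t) + (2 * ∫ x, f x * g x ∂μ) * t
      + ∫ x, f x ^ 2 ∂μ := by
    intro t
    have : 0 ≤ ∫ x, (f x + t * g x) ^ 2 ∂μ := by positivity
    have e : ∀ x, (f x + t * g x) ^ 2 = (t * t) * g x ^ 2 + (2 * t) * (f x * g x) + f x ^ 2 := by
      intro x; ring
    simp_rw [e] at this
    have hs : Integrable (fun x => (t * t) * g x ^ 2 + (2 * t) * (f x * g x)) μ :=
      (hg.const_mul _).add (hfg.const_mul _)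
    rw [integral_add hs hf, integral_add (hg.const_mul _) (hfg.const_mul _), integral_const_mul, integral_const_mul] at this
    linarith
  have := discrim_le_zero key
  rw [discrim] at this
  rw [← Real.sqrt_mul (by positivity)]
  apply Real.abs_le_sqrt
  nlinarith

/-- L² Minkowski. -/
lemma integral_minkowski {α : Type*} [MeasurableSpace α] {μ : Measure α} {f g : α → ℝ}
    (hf : Integrable (fun x => f x ^ 2) μ) (hg : Integrable (fun x => g x ^ 2) μ)
    (hfg : Integrable (fun x => f x * g x) μ) :
    √(∫ x, (f x + g x) ^ 2 ∂μ) ≤ √(∫ x, f x ^ 2 ∂μ) + √(∫ x, g x ^ 2 ∂μ) := by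
  have h := integral_cs hf hg hfg
  have e : ∀ x, (f x + g x) ^ 2 = f x ^ 2 + 2 * (f x * g x) + g x ^ 2 := by intro x; ring
  simp_rw [e]
  have hs : Integrable (fun x => f x ^ 2 + 2 * (f x * g x)) μ := hf.add (hfg.const_mul _)
  rw [integral_add hs hg, integral_add hf (hfg.const_mul _),
    integral_const_mul]
  apply Real.sqrt_le_iff.2 ⟨by positivity, ?_⟩
  have a1 := Real.sq_sqrt (show 0 ≤ ∫ x, f x ^ 2 ∂μ by positivity)
  have a2 := Real.sq_sqrt (show 0 ≤ ∫ x, g x ^ 2 ∂μ by positivity)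
  have := le_abs_self (∫ x, f x * g x ∂μ)
  nlinarith

lemma contOn_int {B : Set E2} (hb : Bornology.IsBounded B) {f : E2 → ℝ} (hf : Continuous f) :
    IntegrableOn f B :=
  (hf.continuousOn.integrableOn_compact (hb.isCompact_closure)).mono_set subset_closure

lemma cont_fderiv {u : E2 → ℝ} (hu : ContDiff ℝ (⊤ : ℕ∞) u) : Continuous (fderiv ℝ u) :=
  hu.continuous_fderiv (by simp)

lemma dil_pointwise {u : E2 → ℝ} (hu : ContDiff ℝ (⊤ : ℕ∞) u) {s : ℝ} (hs1 : s ≤ 1)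
    {R : ℝ} {x : E2} (hx : ‖x‖ ≤ R) :
    (u x - u (s • x)) ^ 2 ≤ (1 - s) * R ^ 2 * ∫ τ in Ioc s 1, ‖fderiv ℝ u (τ • x)‖ ^ 2 := by
  have hcf := cont_fderiv hu
  have hd : ∀ τ : ℝ, HasDerivAt (fun τ : ℝ => u (τ • x)) (fderiv ℝ u (τ • x) x) τ := by
    intro τ
    have h1 : HasDerivAt (fun τ : ℝ => τ • x) x τ := by
      simpa using (hasDerivAt_id τ).smul_const x
    exact ((hu.differentiable (by simp) _).hasFDerivAt.comp_hasDerivAt τ h1)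
  have hc : Continuous (fun τ : ℝ => fderiv ℝ u (τ • x) x) := by fun_prop
  have hc2 : Continuous (fun τ : ℝ => ‖fderiv ℝ u (τ • x)‖ ^ 2) := by fun_prop
  have ftc := intervalIntegral.integral_eq_sub_of_hasDerivAt (a := s) (b := 1)
    (fun τ _ => hd τ) (hc.intervalIntegrable _ _)
  rw [intervalIntegral.integral_of_le hs1, one_smul] at ftc
  have hint : ∀ f : ℝ → ℝ, Continuous f → Integrable f (volume.restrict (Ioc s 1)) := fun f hf =>
    (hf.continuousOn.integrableOn_compact isCompact_Icc).mono_set Ioc_subset_Icc_self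
  have cs := integral_cs (μ := volume.restrict (Ioc s 1)) (f := fun _ => (1 : ℝ))
    (g := fun τ : ℝ => fderiv ℝ u (τ • x) x) (hint _ (by fun_prop)) (hint _ (by fun_prop))
    (hint _ (by fun_prop))
  simp only [one_mul, one_pow] at cs
  rw [ftc] at cs
  have hv : ∫ _ in Ioc s 1, (1 : ℝ) = 1 - s := by
    simp [Measure.real, hs1]
  rw [hv] at cs
  have hm : ∫ τ in Ioc s 1, (fderiv ℝ u (τ • x) x) ^ 2 ≤
      ∫ τ in Ioc s 1, R ^ 2 * ‖fderiv ℝ u (τ • x)‖ ^ 2 := by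
    refine integral_mono (hint _ (by fun_prop)) (hint _ (by fun_prop)) fun τ => ?_
    have h1 := (fderiv ℝ u (τ • x)).le_opNorm x
    have h2 : |fderiv ℝ u (τ • x) x| ≤ ‖fderiv ℝ u (τ • x)‖ * R :=
      h1.trans (mul_le_mul_of_nonneg_left hx (norm_nonneg _))
    have := sq_le_sq' (abs_le.1 h2).1 (abs_le.1 h2).2
    simp only
    linarith [mul_pow ‖fderiv ℝ u (τ • x)‖ R 2]
  rw [integral_const_mul] at hm
  have hsq := pow_le_pow_left₀ (abs_nonneg _) cs 2
  rw [sq_abs, mul_pow, Real.sq_sqrt (by linarith), Real.sq_sqrt (by positivity)] at hsq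
  have := mul_le_mul_of_nonneg_left hm (show 0 ≤ 1 - s by linarith)
  linarith

lemma dil_sq {u : E2 → ℝ} (hu : ContDiff ℝ (⊤ : ℕ∞) u) {s : ℝ} (hs0 : 0 < s) (hs1 : s ≤ 1)
    {R : ℝ} {B : Set E2} (ho : IsOpen B) (hc : Convex ℝ B) (h0 : (0 : E2) ∈ B)
    (hB : B ⊆ Metric.closedBall 0 R) :
    ∫ x in B, (u x - u (s • x)) ^ 2 ≤
      ((1 - s) / s * R) ^ 2 * ∫ x in B, ‖fderiv ℝ u x‖ ^ 2 := by
  have hcf := cont_fderiv hu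
  have hcu := hu.continuous
  have hb : Bornology.IsBounded B := Metric.isBounded_closedBall.subset hB
  set E := ∫ x in B, ‖fderiv ℝ u x‖ ^ 2 with hE
  have hprod : Integrable (Function.uncurry fun (x : E2) (τ : ℝ) => ‖fderiv ℝ u (τ • x)‖ ^ 2)
      ((volume.restrict B).prod (volume.restrict (Ioc s 1))) := by
    rw [Measure.prod_restrict]
    have hcont : Continuous (Function.uncurry
        fun (x : E2) (τ : ℝ) => ‖fderiv ℝ u (τ • x)‖ ^ 2) := by
      unfold Function.uncurry
      fun_prop
    exact (hcont.continuousOn.integrableOn_compact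
      (hb.isCompact_closure.prod (isCompact_Icc (a := s) (b := 1)))).mono_set
      (prod_mono subset_closure Ioc_subset_Icc_self)
  calc ∫ x in B, (u x - u (s • x)) ^ 2
      ≤ ∫ x in B, (1 - s) * R ^ 2 * ∫ τ in Ioc s 1, ‖fderiv ℝ u (τ • x)‖ ^ 2 := by
        refine setIntegral_mono_on (contOn_int hb (by fun_prop)) ?_ ho.measurableSet ?_
        · exact hprod.integral_prod_left.const_mul _
        · intro x hx
          exact dil_pointwise hu hs1 (by simpa using hB hx)
    _ = (1 - s) * R ^ 2 * ∫ τ in Ioc s 1, ∫ x in B, ‖fderiv ℝ u (τ • x)‖ ^ 2 := by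
        rw [integral_const_mul, integral_integral_swap hprod]
    _ ≤ (1 - s) * R ^ 2 * ∫ τ in Ioc s 1, (s ^ 2)⁻¹ * E := by
        refine mul_le_mul_of_nonneg_left ?_ (mul_nonneg (by linarith) (sq_nonneg R))
        refine setIntegral_mono_on hprod.integral_prod_right (integrable_const _) measurableSet_Ioc ?_
        intro τ hτ
        have hτ0 : 0 < τ := hs0.trans hτ.1
        have e := setIntegral_affine (0 : E2) hτ0 (fun x => ‖fderiv ℝ u x‖ ^ 2)
          (Ω := (fun x : E2 => τ⁻¹ • x) ⁻¹' B)
          ((ho.preimage (by fun_prop)).measurableSet)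
        have hpre : (fun x : E2 => 0 + τ • x) ⁻¹' ((fun x : E2 => τ⁻¹ • x) ⁻¹' B) = B := by
          ext x
          simp [smul_smul, inv_mul_cancel₀ hτ0.ne']
        rw [hpre] at e
        simp only [zero_add] at e
        rw [e]
        have hsub : (fun x : E2 => τ⁻¹ • x) ⁻¹' B ⊆ B := by
          intro x hx
          have := hc.smul_mem_of_zero_mem h0 hx (t := τ) ⟨hτ0.le, hτ.2⟩
          simpa [smul_smul, mul_inv_cancel₀ hτ0.ne'] using this
        refine mul_le_mul ?_ ?_ (by positivity) (by positivity)
        · have := hτ.1.le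
          gcongr
        · exact setIntegral_mono_set (contOn_int hb (by fun_prop))
            (Eventually.of_forall fun x => by positivity) hsub.eventuallyLE
    _ = ((1 - s) / s * R) ^ 2 * E := by
        rw [setIntegral_const]
        simp only [Measure.real, Real.volume_Ioc, smul_eq_mul,
          ENNReal.toReal_ofReal (show 0 ≤ 1 - s by linarith)]
        field_simp

lemma mean_min {B : Set E2} (hb : Bornology.IsBounded B) {u : E2 → ℝ} (hu : Continuous u)
    (h0 : ∫ x in B, u x = 0) (c : ℝ) : ∫ x in B, u x ^ 2 ≤ ∫ x in B, (u x - c) ^ 2 := by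
  have e : ∀ x, (u x - c) ^ 2 = u x ^ 2 - 2 * c * u x + c ^ 2 := by intro x; ring
  simp_rw [e]
  have i1 : IntegrableOn (fun x => u x ^ 2) B := contOn_int hb (by fun_prop)
  have i2 : IntegrableOn (fun x => 2 * c * u x) B := contOn_int hb (by fun_prop)
  have i3 : IntegrableOn (fun _ : E2 => c ^ 2) B := contOn_int hb (by fun_prop)
  have i4 : IntegrableOn (fun x => u x ^ 2 - 2 * c * u x) B := i1.sub i2
  rw [integral_add i4 i3, integral_sub i1 i2, integral_const_mul, h0]
  have : 0 ≤ ∫ x in B, c ^ 2 := by positivity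
  linarith

lemma nEig_compare {A B : Set E2} {k R : ℝ} (hk : 1 ≤ k)
    (hoA : IsOpen A) (hneA : A.Nonempty) (hbA : Bornology.IsBounded A)
    (hoB : IsOpen B) (hcB : Convex ℝ B) (h0B : (0 : E2) ∈ B)
    (hBR : B ⊆ Metric.closedBall 0 R)
    (hAB : ∀ x ∈ A, k⁻¹ • x ∈ B) (hBA : ∀ x ∈ B, k⁻¹ • x ∈ A)
    {ρ : ℝ} (hρ : ρ ∈ nSet B) :
    √(nEig1 A) ≤ k * √ρ + (k ^ 2 - 1) * R * √(nEig1 A) * √ρ := by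
  obtain ⟨u, hu, hmean, hV, rfl⟩ := hρ
  have hk0 : 0 < k := by linarith
  have hcf := cont_fderiv hu
  have hcu := hu.continuous
  have hbB : Bornology.IsBounded B := Metric.isBounded_closedBall.subset hBR
  have hR : 0 ≤ R := by simpa using hBR h0B
  set E := ∫ x in B, ‖fderiv ℝ u x‖ ^ 2 with hE
  set V := ∫ x in B, u x ^ 2 with hVdef
  have hE0 : 0 ≤ E := by positivity
  have hV0 : 0 < V := lt_of_le_of_ne (by positivity) (Ne.symm hV)
  have hfin : volume A ≠ ⊤ := hbA.measure_lt_top.ne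
  have hpos : (volume A).toReal ≠ 0 :=
    (ENNReal.toReal_pos (hoA.measure_pos volume hneA).ne' hfin).ne'
  set c : ℝ := (∫ x in A, u (0 + k⁻¹ • x)) / (volume A).toReal with hc
  let w : E2 → ℝ := fun y => u y - c
  have hw : ContDiff ℝ (⊤ : ℕ∞) w := hu.sub contDiff_const
  have hcw := hw.continuous
  have hfw : fderiv ℝ w = fderiv ℝ u := by
    ext1 x; exact fderiv_sub_const c
  let v : E2 → ℝ := fun x => w (0 + k⁻¹ • x)
  have hv : ContDiff ℝ (⊤ : ℕ∞) v := hw.comp (contDiff_const.add (contDiff_id.const_smul k⁻¹))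
  have hvmean : ∫ x in A, v x = 0 := by
    have h1 : IntegrableOn (fun x : E2 => u (0 + k⁻¹ • x)) A := contOn_int hbA (by fun_prop)
    have h2 : IntegrableOn (fun _ : E2 => c) A := contOn_int hbA (by fun_prop)
    change ∫ x in A, (u (0 + k⁻¹ • x) - c) = 0
    rw [integral_sub h1 h2, setIntegral_const, Measure.real, smul_eq_mul, hc]
    field_simp
    simp
  have hA' : (fun x : E2 => 0 + k⁻¹ • x) ⁻¹' ((fun x : E2 => k • x) ⁻¹' A) = A := by
    ext x; simp [smul_smul, mul_inv_cancel₀ hk0.ne']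
  have hoA' : IsOpen ((fun x : E2 => k • x) ⁻¹' A) := hoA.preimage (by fun_prop)
  have hA'B : (fun x : E2 => k • x) ⁻¹' A ⊆ B := by
    intro x hx
    simpa [smul_smul, inv_mul_cancel₀ hk0.ne'] using hAB _ hx
  have hE' : ∫ x in A, ‖fderiv ℝ v x‖ ^ 2 ≤ E := by
    have e := setIntegral_affine 0 (inv_pos.2 hk0) (fun x => ‖fderiv ℝ w x‖ ^ 2)
      hoA'.measurableSet
    rw [hA'] at e
    have : ∀ x, ‖fderiv ℝ v x‖ ^ 2 = _ := fun x => fderiv_affine hw 0 (inv_pos.2 hk0) x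
    simp_rw [this]
    rw [integral_const_mul, e, hfw, ← mul_assoc, mul_inv_cancel₀ (by positivity), one_mul]
    exact setIntegral_mono_set (contOn_int hbB (by fun_prop))
            (Eventually.of_forall fun x => by positivity) hA'B.eventuallyLE
  set V' := ∫ x in A, v x ^ 2 with hV'
  have hk1 : 0 < (k ^ 2)⁻¹ := by positivity
  have hk2 : (k ^ 2)⁻¹ ≤ 1 := inv_le_one_of_one_le₀ (one_le_pow₀ hk)
  have hlow : k⁻¹ ^ 2 * ∫ x in B, (w ((k ^ 2)⁻¹ • x)) ^ 2 ≤ V' := by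
    have e := setIntegral_affine 0 (inv_pos.2 hk0) (fun x => w x ^ 2) hoA'.measurableSet
    rw [hA'] at e
    have e' : V' = (k⁻¹ ^ 2)⁻¹ * ∫ x in (fun x : E2 => k • x) ⁻¹' A, w x ^ 2 := e
    have hoB' : IsOpen ((fun x : E2 => k ^ 2 • x) ⁻¹' B) := hoB.preimage (by fun_prop)
    have e2 := setIntegral_affine 0 hk1 (fun x => w x ^ 2) hoB'.measurableSet
    have hB' : (fun x : E2 => 0 + (k ^ 2)⁻¹ • x) ⁻¹' ((fun x : E2 => k ^ 2 • x) ⁻¹' B) = B := by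
      ext x
      simp [smul_smul, mul_inv_cancel₀ (pow_pos hk0 2).ne']
    rw [hB'] at e2
    simp only [zero_add] at e2
    rw [e2, e']
    have hsub : (fun x : E2 => k ^ 2 • x) ⁻¹' B ⊆ (fun x : E2 => k • x) ⁻¹' A := by
      intro x hx
      have := hBA _ hx
      rw [smul_smul] at this
      have hkk : k⁻¹ * k ^ 2 = k := by field_simp
      rw [hkk] at this
      exact this
    have hm : ∫ x in (fun x : E2 => k ^ 2 • x) ⁻¹' B, w x ^ 2 ≤
        ∫ x in (fun x : E2 => k • x) ⁻¹' A, w x ^ 2 :=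
      setIntegral_mono_set (contOn_int (hbB.subset hA'B) (by fun_prop))
            (Eventually.of_forall fun x => by positivity) hsub.eventuallyLE
    calc _ = k ^ 2 * ∫ x in (fun x : E2 => k ^ 2 • x) ⁻¹' B, w x ^ 2 := by field_simp
      _ ≤ k ^ 2 * ∫ x in (fun x : E2 => k • x) ⁻¹' A, w x ^ 2 := by gcongr
      _ = _ := by field_simp
  have hV'0 : 0 ≤ V' := by positivity
  have hmin := integral_minkowski (μ := volume.restrict B) (f := fun x => w ((k ^ 2)⁻¹ • x))
    (g := fun x => w x - w ((k ^ 2)⁻¹ • x)) (contOn_int hbB (by fun_prop))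
    (contOn_int hbB (by fun_prop)) (contOn_int hbB (by fun_prop))
  simp only [add_sub_cancel] at hmin
  have h1 : √V ≤ √(∫ x in B, w x ^ 2) := Real.sqrt_le_sqrt (mean_min hbB hcu hmean c)
  have h2 : √(∫ x in B, (w ((k ^ 2)⁻¹ • x)) ^ 2) ≤ k * √V' := by
    apply Real.sqrt_le_iff.2 ⟨by positivity, ?_⟩
    rw [mul_pow, Real.sq_sqrt hV'0]
    have := mul_le_mul_of_nonneg_left hlow (show 0 ≤ k ^ 2 by positivity)
    rwa [← mul_assoc, ← mul_pow, mul_inv_cancel₀ hk0.ne', one_pow, one_mul] at this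
  have h3 : √(∫ x in B, (w x - w ((k ^ 2)⁻¹ • x)) ^ 2) ≤ (k ^ 2 - 1) * R * √E := by
    have := dil_sq hw hk1 hk2 hoB hcB h0B hBR
    have hco : (1 - (k ^ 2)⁻¹) / (k ^ 2)⁻¹ = k ^ 2 - 1 := by field_simp
    rw [hco, hfw] at this
    have hkk : 0 ≤ k ^ 2 - 1 := by nlinarith
    apply Real.sqrt_le_iff.2 ⟨by positivity, ?_⟩
    rwa [mul_pow _ (√E), Real.sq_sqrt hE0]
  have h4 : √V ≤ k * √V' + (k ^ 2 - 1) * R * √E := by linarith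
  have h5 : √(nEig1 A) * √V' ≤ √E := by
    rcases eq_or_ne V' 0 with h | h
    · rw [h]; simp
    · have hle : nEig1 A ≤ (∫ x in A, ‖fderiv ℝ v x‖ ^ 2) / V' :=
        csInf_le (nSet_bdd A) ⟨v, hv, hvmean, h, rfl⟩
      rw [← Real.sqrt_mul (nEig1_nonneg A)]
      apply Real.sqrt_le_sqrt
      rw [le_div_iff₀ (lt_of_le_of_ne hV'0 (Ne.symm h))] at hle
      linarith
  have hsV : 0 < √V := Real.sqrt_pos.2 hV0
  rw [Real.sqrt_div hE0]
  have h6 : √(nEig1 A) * √V ≤ k * √E + (k ^ 2 - 1) * R * √(nEig1 A) * √E := by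
    have a1 := mul_le_mul_of_nonneg_left h4 (Real.sqrt_nonneg (nEig1 A))
    have a2 := mul_le_mul_of_nonneg_left h5 hk0.le
    linarith
  calc √(nEig1 A) = (√(nEig1 A) * √V) / √V := by field_simp
    _ ≤ (k * √E + (k ^ 2 - 1) * R * √(nEig1 A) * √E) / √V := by gcongr
    _ = _ := by ring

lemma nEig_compare' {A B : Set E2} {k R : ℝ} (hk : 1 ≤ k)
    (hoA : IsOpen A) (hneA : A.Nonempty) (hbA : Bornology.IsBounded A)
    (hoB : IsOpen B) (hcB : Convex ℝ B) (h0B : (0 : E2) ∈ B)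
    (hBR : B ⊆ Metric.closedBall 0 R)
    (hAB : ∀ x ∈ A, k⁻¹ • x ∈ B) (hBA : ∀ x ∈ B, k⁻¹ • x ∈ A) :
    √(nEig1 A) ≤ k * √(nEig1 B) + (k ^ 2 - 1) * R * √(nEig1 A) * √(nEig1 B) := by
  have hbB : Bornology.IsBounded B := Metric.isBounded_closedBall.subset hBR
  have hcl : nEig1 B ∈ closure (nSet B) :=
    csInf_mem_closure (nSet_nonempty ⟨0, h0B⟩ hoB hbB) (nSet_bdd B)
  have hclosed : IsClosed {ρ : ℝ | √(nEig1 A) ≤ k * √ρ + (k ^ 2 - 1) * R * √(nEig1 A) * √ρ} :=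
    isClosed_le (by fun_prop) (by fun_prop)
  exact closure_minimal
    (fun ρ hρ => nEig_compare hk hoA hneA hbA hoB hcB h0B hBR hAB hBA hρ) hclosed hcl

/-- The area form. -/
def om (d : E2) : E2 →L[ℝ] ℝ :=
  d 0 • (EuclideanSpace.proj (𝕜 := ℝ) (1 : Fin 2) : E2 →L[ℝ] ℝ)
    - d 1 • (EuclideanSpace.proj (𝕜 := ℝ) (0 : Fin 2) : E2 →L[ℝ] ℝ)

lemma om_apply (d x : E2) : om d x = d 0 * x 1 - d 1 * x 0 := by
  simp [om]

lemma norm_sq_E2 (x : E2) : ‖x‖ ^ 2 = x 0 ^ 2 + x 1 ^ 2 := by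
  rw [EuclideanSpace.norm_sq_eq]; simp [Fin.sum_univ_two]

def rot (d : E2) : E2 := !₂[-d 1, d 0]

lemma rot_norm (d : E2) : ‖rot d‖ = ‖d‖ := by
  have : ‖rot d‖ ^ 2 = ‖d‖ ^ 2 := by
    rw [norm_sq_E2, norm_sq_E2]; simp [rot]; ring
  exact (pow_left_inj₀ (norm_nonneg _) (norm_nonneg _) two_ne_zero).1 this

lemma om_rot (d : E2) : om d (rot d) = ‖d‖ ^ 2 := by
  rw [om_apply, norm_sq_E2]; simp [rot]; ring

lemma om_le (d x : E2) : |om d x| ≤ ‖d‖ * ‖x‖ := by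
  apply abs_le_of_sq_le_sq _ (by positivity)
  rw [mul_pow, norm_sq_E2, norm_sq_E2, om_apply]
  nlinarith [sq_nonneg (d 0 * x 0 + d 1 * x 1)]

lemma strip_test {Ω : Set E2} {a d : E2} {W : ℝ} (hW0 : 0 ≤ W)
    (hW : ∀ x ∈ Ω, |om d (x - a)| ≤ W) {u : E2 → ℝ} (hu : ContDiff ℝ (⊤ : ℕ∞) u)
    (hs : HasCompactSupport u) (hsΩ : tsupport u ⊆ Ω) :
    ‖d‖ ^ 2 * ∫ x, u x ^ 2 ≤
      (2 * W * √(∫ x, u x ^ 2)) * (‖d‖ * √(∫ x, ‖fderiv ℝ u x‖ ^ 2)) := by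
  have hcf := cont_fderiv hu
  have hcu := hu.continuous
  have hsf : HasCompactSupport (fderiv ℝ u) := hs.fderiv ℝ
  let f : E2 → ℝ := fun x => om d (x - a)
  let g : E2 → ℝ := fun x => u x ^ 2
  have hcfn : Continuous f := by fun_prop
  have hf : ∀ x, HasFDerivAt f (om d) x := fun x =>
    (om d).hasFDerivAt.comp x ((hasFDerivAt_id x).sub_const a)
  have hg : ∀ x, HasFDerivAt g ((2 * u x) • fderiv ℝ u x) x := fun x => by
    have h := (hu.differentiable (by simp) x).hasFDerivAt.pow 2
    convert! h using 1
    simp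
  have key : ∀ F : E2 → ℝ, Continuous F → (∀ x, u x = 0 → F x = 0) → Integrable F := by
    intro F hF h0
    refine hF.integrable_of_hasCompactSupport (hs.mono' ?_)
    intro x hx
    apply subset_closure
    exact fun h => hx (h0 x h)
  have ibp := integral_bilinear_hasFDerivAt_right_eq_neg_left_of_integrable
    (μ := (volume : Measure E2)) (f := f) (f' := fun _ => om d) (g := g)
    (g' := fun x => (2 * u x) • fderiv ℝ u x) (v := rot d)
    (B := ContinuousLinearMap.mul ℝ ℝ)
    (key _ (by simp only [ContinuousLinearMap.mul_apply', g]; fun_prop)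
      (fun x h => by simp [g, h]))
    (key _ (by
      simp only [ContinuousLinearMap.mul_apply', _root_.smul_apply, smul_eq_mul]
      fun_prop) (fun x h => by simp [h]))
    (key _ (by simp only [ContinuousLinearMap.mul_apply', g]; fun_prop)
      (fun x h => by simp [g, h]))
    (fun x _ => hf x) (fun x _ => hg x)
  simp only [ContinuousLinearMap.mul_apply', _root_.smul_apply, smul_eq_mul, om_rot]
    at ibp
  rw [integral_const_mul] at ibp
  have e : ∀ x, f x * (2 * u x * fderiv ℝ u x (rot d)) =
      (2 * f x * u x) * fderiv ℝ u x (rot d) := by intro x; ring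
  simp_rw [e] at ibp
  have hi2 : Integrable (fun x => (fderiv ℝ u x (rot d)) ^ 2) := by
    refine Continuous.integrable_of_hasCompactSupport (by fun_prop) ?_
    exact hsf.comp_left (g := fun L : E2 →L[ℝ] ℝ => (L (rot d)) ^ 2) (by simp)
  have hi3 : Integrable (fun x => ‖fderiv ℝ u x‖ ^ 2) := by
    refine Continuous.integrable_of_hasCompactSupport (by fun_prop) ?_
    exact hsf.comp_left (g := fun L : E2 →L[ℝ] ℝ => ‖L‖ ^ 2) (by simp)
  have hi1 : Integrable (fun x => (2 * f x * u x) ^ 2) :=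
    key _ (by fun_prop) (fun x h => by simp [h])
  have cs := integral_cs (μ := (volume : Measure E2)) hi1 hi2
    (key _ (by fun_prop) (fun x h => by simp [h]))
  rw [ibp, abs_neg, abs_of_nonneg (by positivity)] at cs
  have b1 : √(∫ x, (2 * f x * u x) ^ 2) ≤ 2 * W * √(∫ x, u x ^ 2) := by
    apply Real.sqrt_le_iff.2 ⟨by positivity, ?_⟩
    rw [mul_pow _ (√_), Real.sq_sqrt (by positivity), ← integral_const_mul]
    refine integral_mono hi1 (key _ (by fun_prop) (fun x h => by simp [h])) fun x => ?_
    by_cases hx : u x = 0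
    · simp [hx]
    · have h1 := hW x (hsΩ (subset_closure hx))
      have h2 : f x ^ 2 ≤ W ^ 2 := sq_le_sq' (abs_le.1 h1).1 (abs_le.1 h1).2
      simp only [mul_pow]
      gcongr
  have b2 : √(∫ x, (fderiv ℝ u x (rot d)) ^ 2) ≤ ‖d‖ * √(∫ x, ‖fderiv ℝ u x‖ ^ 2) := by
    apply Real.sqrt_le_iff.2 ⟨by positivity, ?_⟩
    rw [mul_pow _ (√_), Real.sq_sqrt (by positivity), ← integral_const_mul]
    refine integral_mono hi2 (hi3.const_mul _) fun x => ?_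
    have h1 := (fderiv ℝ u x).le_opNorm (rot d)
    rw [rot_norm, Real.norm_eq_abs] at h1
    have := sq_le_sq' (abs_le.1 h1).1 (abs_le.1 h1).2
    simp only
    linarith [mul_pow ‖fderiv ℝ u x‖ ‖d‖ 2]
  exact cs.trans (mul_le_mul b1 b2 (by positivity) (by positivity))

lemma strip_bound {Ω : Set E2} (hne : Ω.Nonempty) (ho : IsOpen Ω) {a d : E2} {W : ℝ}
    (hW0 : 0 < W) (hW : ∀ x ∈ Ω, |om d (x - a)| ≤ W) :
    ‖d‖ ^ 2 / (4 * W ^ 2) ≤ dEig1 Ω := by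
  refine le_csInf (dSet_nonempty hne ho) ?_
  rintro R ⟨u, h1, h2, h3, h4, rfl⟩
  have h := strip_test hW0.le hW h1 h2 h3
  have hV : 0 < ∫ x, u x ^ 2 := lt_of_le_of_ne (by positivity) (Ne.symm h4)
  have hE : 0 ≤ ∫ x, ‖fderiv ℝ u x‖ ^ 2 := by positivity
  rw [div_le_div_iff₀ (by positivity) hV]
  set V := ∫ x, u x ^ 2
  set E := ∫ x, ‖fderiv ℝ u x‖ ^ 2
  have hsV : 0 < √V := Real.sqrt_pos.2 hV
  rcases (norm_nonneg d).eq_or_lt with hd | hd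
  · rw [← hd]; simp; positivity
  have h' : ‖d‖ * √V ≤ 2 * W * √E := by
    have e1 : (‖d‖ * √V) * (‖d‖ * √V) ≤ (2 * W * √E) * (‖d‖ * √V) := by
      nlinarith [Real.sq_sqrt hV.le]
    exact le_of_mul_le_mul_right e1 (by positivity)
  have := pow_le_pow_left₀ (by positivity) h' 2
  rw [mul_pow, mul_pow, mul_pow, Real.sq_sqrt hV.le, Real.sq_sqrt hE] at this
  linarith

/-- A point with almost maximal value. -/
lemma exists_half_max {X : Type*} {S : Set X} (f : X → ℝ) {C : ℝ} (hC : ∀ x ∈ S, f x ≤ C)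
    {x₀ : X} (hx₀ : x₀ ∈ S) (hpos : 0 < f x₀) : ∃ p ∈ S, 0 < f p ∧ ∀ x ∈ S, f x ≤ 2 * f p := by
  have hb : BddAbove (f '' S) := ⟨C, by rintro _ ⟨x, hx, rfl⟩; exact hC x hx⟩
  have h1 : f x₀ ≤ sSup (f '' S) := le_csSup hb ⟨x₀, hx₀, rfl⟩
  obtain ⟨_, ⟨p, hp, rfl⟩, hlt⟩ := exists_lt_of_lt_csSup (s := f '' S) ⟨_, x₀, hx₀, rfl⟩
    (show sSup (f '' S) / 2 < sSup (f '' S) by linarith)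
  exact ⟨p, hp, by linarith, fun x hx => by linarith [le_csSup hb ⟨x, hx, rfl⟩]⟩

lemma cramer (d q z : E2) (h : om d q ≠ 0) :
    z = (om z q / om d q) • d + (om d z / om d q) • q := by
  have key : ∀ i : Fin 2, om d q * z i = om z q * d i + om d z * q i := by
    intro i
    simp only [om_apply]
    fin_cases i <;> simp only [Fin.zero_eta, Fin.mk_one] <;> ring
  ext i
  have e : z i = (om d q * z i) / om d q := by field_simp
  rw [e, key i]
  simp only [PiLp.add_apply, PiLp.smul_apply, smul_eq_mul]
  ring

/-- The center of the standard triangle. -/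
def ctr : E2 := !₂[1/3, 1/3]

lemma coord_le (x : E2) (i : Fin 2) : |x i| ≤ ‖x‖ := by
  simpa using PiLp.norm_apply_le x i

/-- volume of a reference ball -/
def kap : ℝ := (volume (Metric.ball ctr (1/6))).toReal

lemma kap_pos : 0 < kap :=
  ENNReal.toReal_pos (Metric.measure_ball_pos volume _ (by norm_num)).ne' measure_ball_lt_top.ne

lemma tri_mem {Ω : Set E2} (hc : Convex ℝ Ω) {a b p : E2} (ha : a ∈ Ω) (hb : b ∈ Ω) (hp : p ∈ Ω)
    {α β : ℝ} (hα : |α| ≤ 1/6) (hβ : |β| ≤ 1/6) :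
    a + ((1/3 + α) • (b - a) + (1/3 + β) • (p - a)) ∈ Ω := by
  rw [abs_le] at hα hβ
  have := hc.sum_mem (t := Finset.univ) (w := ![1/3 - α - β, 1/3 + α, 1/3 + β]) (z := ![a, b, p])
    (by intro i _; fin_cases i <;> simp <;> linarith)
    (by simp [Fin.sum_univ_three]; ring)
    (by intro i _; fin_cases i <;> simpa)
  simp [Fin.sum_univ_three] at this
  convert this using 1
  module

/-- The linear map sending the standard basis to `(d, q)`. -/
def lin (d q : E2) : E2 →ₗ[ℝ] E2 where
  toFun x := x 0 • d + x 1 • q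
  map_add' x y := by simp; module
  map_smul' c x := by simp [smul_smul]

lemma lin_apply (d q x : E2) : lin d q x = x 0 • d + x 1 • q := rfl

lemma lin_det (d q : E2) : LinearMap.det (lin d q) = om d q := by
  rw [← LinearMap.det_toMatrix (EuclideanSpace.basisFun (Fin 2) ℝ).toBasis, Matrix.det_fin_two,
    om_apply]
  simp [LinearMap.toMatrix_apply, lin_apply]
  ring

lemma area_bound {Ω : Set E2} (hc : Convex ℝ Ω) (hbd : Bornology.IsBounded Ω)
    {a b p : E2} (ha : a ∈ Ω) (hb : b ∈ Ω) (hp : p ∈ Ω) :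
    |om (b - a) (p - a)| * kap ≤ (volume Ω).toReal := by
  have h1 := Measure.addHaar_image_linearMap (volume : Measure E2) (lin (b - a) (p - a))
    (Metric.ball ctr (1/6))
  have h2 : (fun x => a + x) '' (lin (b - a) (p - a) '' (Metric.ball ctr (1/6))) ⊆ Ω := by
    rintro _ ⟨_, ⟨y, hy, rfl⟩, rfl⟩
    rw [mem_ball_iff_norm] at hy
    have c0 := (coord_le (y - ctr) 0).trans hy.le
    have c1 := (coord_le (y - ctr) 1).trans hy.le
    have := tri_mem hc ha hb hp c0 c1
    convert this using 2
    simp [lin_apply, ctr]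
  have h3 := measure_mono (μ := (volume : Measure E2)) h2
  rw [image_add_left, measure_preimage_add, h1, lin_det] at h3
  have := ENNReal.toReal_mono hbd.measure_lt_top.ne h3
  rwa [ENNReal.toReal_mul, ENNReal.toReal_ofReal (abs_nonneg _)] at this

/-- Normalization: sets with bounded first coordinate can be put between two fixed balls. -/
lemma normalize_shape {M : ℝ} (hM : 0 < M) {Ω : Set E2} (hne : Ω.Nonempty) (ho : IsOpen Ω)
    (hbd : Bornology.IsBounded Ω) (hc : Convex ℝ Ω) (hF : (volume Ω).toReal * dEig1 Ω ≤ M) :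
    ∃ Ω' : Set E2, IsOpen Ω' ∧ Convex ℝ Ω' ∧ Metric.ball 0 (kap / (192 * M)) ⊆ Ω' ∧
      Ω' ⊆ Metric.closedBall 0 3 ∧
      (volume Ω').toReal * dEig1 Ω' = (volume Ω).toReal * dEig1 Ω ∧
      (volume Ω').toReal * nEig1 Ω' = (volume Ω).toReal * nEig1 Ω := by
  have hne0 := hne
  obtain ⟨a, ha⟩ := hne
  obtain ⟨ε, hε, hball⟩ := Metric.isOpen_iff.1 ho a ha
  obtain ⟨C, hC⟩ := hbd.exists_norm_le
  have hx₀ : a + EuclideanSpace.single 0 (ε / 2) ∈ Ω := by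
    apply hball
    simp [abs_of_pos hε, show 0 < ε from hε]
  obtain ⟨b, hb, hbpos, hbmax⟩ := exists_half_max (S := Ω) (fun x => ‖x - a‖) (C := C + ‖a‖)
    (fun x hx => (norm_sub_le _ _).trans (by linarith [hC x hx])) hx₀
    (by simp only [add_sub_cancel_left, norm_pos_iff]; intro h
        have := congrArg (fun z : E2 => z 0) h
        simp at this
        exact hε.ne' this)
  set D := ‖b - a‖ with hD
  have hx₁ : a + (ε / (2 * D)) • rot (b - a) ∈ Ω := by
    apply hball
    rw [mem_ball_iff_norm, add_sub_cancel_left, norm_smul, rot_norm, ← hD,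
      Real.norm_of_nonneg (by positivity)]
    field_simp
    linarith
  obtain ⟨p, hp, hppos, hpmax⟩ := exists_half_max (S := Ω) (fun x => |om (b - a) (x - a)|)
    (C := D * (2 * D))
    (fun x hx => (om_le _ _).trans (by have := hbmax x hx; gcongr)) hx₁
    (by simp only [add_sub_cancel_left, map_smul, om_rot, ← hD, smul_eq_mul]; positivity)
  set w := om (b - a) (p - a) with hw
  have hlam := strip_bound hne0 ho (a := a) (d := b - a) (W := 2 * |w|) (by positivity) hpmax
  have harea := area_bound hc hbd ha hb hp
  rw [← hw] at harea
  rw [← hD] at hlam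
  have hkap := kap_pos
  have hbig : kap * D ^ 2 ≤ 16 * M * |w| := by
    have h1 : (|w| * kap) * (D ^ 2 / (4 * (2 * |w|) ^ 2)) ≤ M :=
      (mul_le_mul harea hlam (by positivity) (by positivity)).trans hF
    have h2 : (|w| * kap) * (D ^ 2 / (4 * (2 * |w|) ^ 2)) = kap * D ^ 2 / (16 * |w|) := by
      field_simp; ring
    rw [h2, div_le_iff₀ (by positivity)] at h1
    linarith
  have hw0 : w ≠ 0 := abs_pos.1 hppos
  let q : E2 := a + ((1/3 : ℝ) • (b - a) + (1/3 : ℝ) • (p - a))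
  refine ⟨(fun x => q + D • x) ⁻¹' Ω, affine_isOpen q D ho, affine_convex q D hc, ?_, ?_, ?_, ?_⟩
  · intro y hy
    rw [mem_ball_zero_iff] at hy
    have hpD : ‖p - a‖ ≤ 2 * D := hbmax p hp
    have hy1 : ‖D • y‖ * (2 * D) ≤ |w| * (1/6) := by
      rw [norm_smul, Real.norm_of_nonneg hbpos.le]
      rw [lt_div_iff₀ (by positivity)] at hy
      have : ‖y‖ * (192 * M) * D ^ 2 ≤ 16 * M * |w| :=
        le_trans (mul_le_mul_of_nonneg_right hy.le (by positivity)) hbig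
      have h3 : (16 * M) * (12 * (‖y‖ * D ^ 2)) ≤ (16 * M) * |w| := by linarith
      have := le_of_mul_le_mul_left h3 (by positivity)
      nlinarith
    have hα : |om (D • y) (p - a) / w| ≤ 1/6 := by
      rw [abs_div, div_le_iff₀ hppos]
      refine (om_le _ _).trans ?_
      calc _ ≤ ‖D • y‖ * (2 * D) := by gcongr
        _ ≤ _ := by linarith
    have hβ : |om (b - a) (D • y) / w| ≤ 1/6 := by
      rw [abs_div, div_le_iff₀ hppos]
      refine (om_le _ _).trans ?_
      rw [← hD]
      have : 0 ≤ ‖D • y‖ * D := by positivity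
      linarith
    have := tri_mem hc ha hb hp hα hβ
    simp only [mem_preimage]
    convert this using 1
    have hdec : D • y = (om (D • y) (p - a) / w) • (b - a) + (om (b - a) (D • y) / w) • (p - a) :=
      cramer (b - a) (p - a) (D • y) hw0
    nth_rewrite 1 [hdec]
    simp only [q]
    module
  · intro y hy
    simp only [mem_preimage] at hy
    have h1 : ‖q + D • y - a‖ ≤ 2 * D := hbmax _ hy
    have hpD : ‖p - a‖ ≤ 2 * D := hbmax p hp
    have h2 : ‖q - a‖ ≤ D := by
      have : q - a = (1/3 : ℝ) • (b - a) + (1/3 : ℝ) • (p - a) := by simp only [q]; abel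
      rw [this]
      refine (norm_add_le _ _).trans ?_
      rw [norm_smul, norm_smul, ← hD]
      norm_num
      linarith
    have h3 : ‖D • y‖ ≤ 3 * D := by
      have : D • y = (q + D • y - a) - (q - a) := by abel
      rw [this]
      exact (norm_sub_le _ _).trans (by linarith)
    rw [norm_smul, Real.norm_of_nonneg hbpos.le] at h3
    rw [mem_closedBall_zero_iff]
    nlinarith
  · rw [volume_affine q hbpos ho.measurableSet, dEig1_affine q hbpos hne0 ho]
    have : D ≠ 0 := hbpos.ne'
    field_simp
  · rw [volume_affine q hbpos ho.measurableSet, nEig1_affine q hbpos hne0 ho hbd]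
    have : D ≠ 0 := hbpos.ne'
    field_simp

lemma limit_shape {r : ℝ} (hr : 0 < r) (A : ℕ → Set E2) (hA : ∀ n, IsOpen (A n))
    (hc : ∀ n, Convex ℝ (A n)) (hin : ∀ n, Metric.ball 0 r ⊆ A n)
    (hout : ∀ n, A n ⊆ Metric.closedBall 0 3) (U : Ultrafilter ℕ) :
    ∃ Ω : Set E2, IsOpen Ω ∧ Convex ℝ Ω ∧ (0 : E2) ∈ Ω ∧ Ω ⊆ Metric.closedBall 0 3 ∧
      ∀ k : ℝ, 1 < k → ∀ᶠ n in (U : Filter ℕ),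
        (∀ x ∈ Ω, k⁻¹ • x ∈ A n) ∧ (∀ x ∈ A n, k⁻¹ • x ∈ Ω) := by
  have h0 : ∀ n, (0 : E2) ∈ A n := fun n => hin n (Metric.mem_ball_self hr)
  have habs : ∀ n, Absorbent ℝ (A n) := fun n => absorbent_nhds_zero ((hA n).mem_nhds (h0 n))
  have hup : ∀ n x, gauge (A n) x ≤ ‖x‖ / r := fun n x => by
    rw [le_div_iff₀' hr]; exact mul_gauge_le_norm (hin n)
  have hlow : ∀ n x, ‖x‖ / 3 ≤ gauge (A n) x := fun n x =>
    le_gauge_of_subset_closedBall (habs n) (by norm_num) (hout n)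
  have hex : ∀ x : E2, ∃ y : ℝ, Tendsto (fun n => gauge (A n) x) U (nhds y) := by
    intro x
    have hk : IsCompact (Icc (0 : ℝ) (‖x‖ / r)) := isCompact_Icc
    obtain ⟨y, -, hy⟩ := hk.ultrafilter_le_nhds (U.map (fun n => gauge (A n) x)) (by
      rw [le_principal_iff]
      exact Filter.mem_map.2 (Eventually.of_forall fun n => ⟨gauge_nonneg _, hup n x⟩))
    exact ⟨y, hy⟩
  choose g hg using hex
  have hsub : ∀ x y, g (x + y) ≤ g x + g y := fun x y =>
    le_of_tendsto_of_tendsto' (hg (x + y)) ((hg x).add (hg y))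
      fun n => gauge_add_le (hc n) (habs n) x y
  have hhom : ∀ (t : ℝ) (x : E2), 0 ≤ t → g (t • x) = t * g x := fun t x ht => by
    refine tendsto_nhds_unique (hg (t • x)) ?_
    simp_rw [gauge_smul_of_nonneg ht]
    exact (hg x).const_mul t
  have hgup : ∀ x, g x ≤ ‖x‖ / r := fun x => le_of_tendsto' (hg x) fun n => hup n x
  have hglow : ∀ x, ‖x‖ / 3 ≤ g x := fun x => ge_of_tendsto' (hg x) fun n => hlow n x
  have hlipn : ∀ n x y, |gauge (A n) x - gauge (A n) y| ≤ ‖x - y‖ / r := by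
    have h1 : ∀ n x y, gauge (A n) x - gauge (A n) y ≤ ‖x - y‖ / r := fun n x y => by
      have := gauge_add_le (hc n) (habs n) (x - y) y
      rw [sub_add_cancel] at this
      linarith [hup n (x - y)]
    intro n x y
    rw [abs_le]
    have := h1 n y x
    rw [norm_sub_rev] at this
    exact ⟨by linarith, h1 n x y⟩
  have hlip : ∀ x y, |g x - g y| ≤ ‖x - y‖ / r := fun x y =>
    le_of_tendsto' ((hg x).sub (hg y)).abs fun n => hlipn n x y
  have hcont : Continuous g := by
    refine (LipschitzWith.of_dist_le_mul (K := ⟨r⁻¹, by positivity⟩) fun x y => ?_).continuous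
    rw [Real.dist_eq, dist_eq_norm]
    refine (hlip x y).trans (le_of_eq ?_)
    rw [div_eq_inv_mul]; rfl
  have hg0 : g 0 = 0 := by simpa using hhom 0 0 le_rfl
  have hunif : ∀ ε > 0, ∀ᶠ n in (U : Filter ℕ), ∀ x : E2, |gauge (A n) x - g x| ≤ ε * ‖x‖ := by
    intro ε hε
    obtain ⟨t, -, htf, htc⟩ := (isCompact_sphere (0 : E2) 1).finite_cover_balls
      (show 0 < ε / 3 * r by positivity)
    have hev : ∀ᶠ n in (U : Filter ℕ), ∀ y ∈ t, |gauge (A n) y - g y| < ε / 3 := by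
      rw [eventually_all_finite htf]
      intro y _
      exact Metric.tendsto_nhds.1 (hg y) (ε / 3) (by positivity)
    filter_upwards [hev] with n hn
    have hsph : ∀ x : E2, ‖x‖ = 1 → |gauge (A n) x - g x| ≤ ε := by
      intro x hx
      have hx' := htc (show x ∈ Metric.sphere (0 : E2) 1 by simpa using hx)
      simp only [mem_iUnion] at hx'
      obtain ⟨y, hy, hxy⟩ := hx'
      rw [mem_ball_iff_norm] at hxy
      have hd : ‖x - y‖ / r ≤ ε / 3 := by rw [div_le_iff₀ hr]; exact hxy.le
      have a1 := abs_le.1 ((hlipn n x y).trans hd)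
      have a2 := abs_lt.1 (hn y hy)
      have a3 := abs_le.1 ((hlip x y).trans hd)
      rw [abs_le]
      constructor <;> linarith [a1.1, a1.2, a2.1, a2.2, a3.1, a3.2]
    intro x
    rcases eq_or_ne x 0 with rfl | hx
    · simp [hg0]
    · have hn0 : 0 < ‖x‖ := norm_pos_iff.2 hx
      have h1 := hsph (‖x‖⁻¹ • x) (by rw [norm_smul, norm_inv, norm_norm, inv_mul_cancel₀ hn0.ne'])
      rw [gauge_smul_of_nonneg (by positivity), hhom _ _ (by positivity), smul_eq_mul, ← mul_sub,
        abs_mul, abs_of_pos (inv_pos.2 hn0), inv_mul_le_iff₀ hn0] at h1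
      linarith
  have hself : ∀ n x, x ∈ A n ↔ gauge (A n) x < 1 := fun n x => by
    have := setOfPred_gauge_lt_one_eq_self_of_isOpen (hc n) (h0 n) (hA n)
    exact ⟨fun h => gauge_lt_one_of_mem_of_isOpen (hA n) h, fun h => this ▸ h⟩
  refine ⟨{x | g x < 1}, isOpen_lt hcont continuous_const, ?_, ?_, ?_, ?_⟩
  · intro x hx y hy s t hs ht hst
    simp only [mem_ofPred_eq] at *
    refine (hsub _ _).trans_lt ?_
    rw [hhom _ _ hs, hhom _ _ ht]
    rcases hs.eq_or_lt with rfl | hs'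
    · have : t = 1 := by linarith
      subst this; linarith
    · nlinarith
  · simp [hg0]
  · intro x hx
    simp only [mem_ofPred_eq] at hx
    rw [mem_closedBall_zero_iff]
    linarith [hglow x]
  · intro k hk
    have hk0 : 0 < k := by linarith
    filter_upwards [hunif ((k - 1) / 3) (by linarith)] with n hn
    constructor
    · intro x hx
      replace hx : g x < 1 := hx
      rw [hself, gauge_smul_of_nonneg (by positivity), smul_eq_mul, inv_mul_lt_iff₀ hk0]
      have a := (abs_le.1 (hn x)).2
      have b := mul_le_mul_of_nonneg_left (hglow x) (show 0 ≤ k - 1 by linarith)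
      have c := mul_lt_mul_of_pos_left hx hk0
      linarith
    · intro x hx
      rw [hself] at hx
      rw [hhom _ _ (by positivity), inv_mul_lt_iff₀ hk0]
      have a := (abs_le.1 (hn x)).1
      have b := mul_le_mul_of_nonneg_left (hlow n x) (show 0 ≤ k - 1 by linarith)
      have c := mul_lt_mul_of_pos_left hx hk0
      linarith

lemma squeeze_k {U : Filter ℕ} {s : ℕ → ℝ} {a : ℝ} {l h : ℝ → ℝ}
    (hl : Tendsto l (nhdsWithin 1 (Ioi 1)) (nhds a)) (hh : Tendsto h (nhdsWithin 1 (Ioi 1)) (nhds a))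
    (H : ∀ᶠ k in nhdsWithin (1 : ℝ) (Ioi 1), ∀ᶠ n in U, l k ≤ s n ∧ s n ≤ h k) :
    Tendsto s U (nhds a) := by
  refine tendsto_order.2 ⟨fun c hc => ?_, fun c hc => ?_⟩
  · obtain ⟨k, h1, h2⟩ := (H.and (hl.eventually_const_lt hc)).exists
    filter_upwards [h1] with n hn
    linarith [hn.1]
  · obtain ⟨k, h1, h2⟩ := (H.and (hh.eventually_lt_const hc)).exists
    filter_upwards [h1] with n hn
    linarith [hn.2]

lemma squeeze_sq {U : Filter ℕ} {s : ℕ → ℝ} {a : ℝ}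
    (H : ∀ k : ℝ, 1 < k → ∀ᶠ n in U, a ≤ k ^ 2 * s n ∧ s n ≤ k ^ 2 * a) :
    Tendsto s U (nhds a) := by
  refine squeeze_k (l := fun k => a / k ^ 2) (h := fun k => k ^ 2 * a) ?_ ?_ ?_
  · have : ContinuousAt (fun k : ℝ => a / k ^ 2) 1 := by fun_prop (disch := norm_num)
    simpa using this.tendsto.mono_left nhdsWithin_le_nhds
  · have : ContinuousAt (fun k : ℝ => k ^ 2 * a) 1 := by fun_prop
    simpa using this.tendsto.mono_left nhdsWithin_le_nhds
  · filter_upwards [self_mem_nhdsWithin] with k hk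
    have hk0 : (0 : ℝ) < k := lt_trans one_pos hk
    filter_upwards [H k hk] with n hn
    exact ⟨by rw [div_le_iff₀' (by positivity)]; exact hn.1, hn.2⟩

lemma squeeze_n {U : Filter ℕ} {s : ℕ → ℝ} {m : ℝ} (hm : 0 ≤ m)
    (H : ∀ k : ℝ, 1 < k → ∀ᶠ n in U, s n ≤ k * m + (k ^ 2 - 1) * 3 * s n * m ∧
      m ≤ k * s n + (k ^ 2 - 1) * 3 * m * s n) :
    Tendsto s U (nhds m) := by
  refine squeeze_k (l := fun k => m / (k + (k ^ 2 - 1) * 3 * m))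
    (h := fun k => k * m / (1 - (k ^ 2 - 1) * 3 * m)) ?_ ?_ ?_
  · have : ContinuousAt (fun k : ℝ => m / (k + (k ^ 2 - 1) * 3 * m)) 1 := by
      fun_prop (disch := norm_num)
    simpa using this.tendsto.mono_left nhdsWithin_le_nhds
  · have : ContinuousAt (fun k : ℝ => k * m / (1 - (k ^ 2 - 1) * 3 * m)) 1 := by
      fun_prop (disch := norm_num)
    simpa using this.tendsto.mono_left nhdsWithin_le_nhds
  · have hc : ContinuousAt (fun k : ℝ => 1 - (k ^ 2 - 1) * 3 * m) 1 := by fun_prop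
    have hpos : ∀ᶠ k in nhdsWithin (1 : ℝ) (Ioi 1), 0 < 1 - (k ^ 2 - 1) * 3 * m :=
      nhdsWithin_le_nhds (hc.tendsto.eventually_const_lt (by norm_num))
    filter_upwards [self_mem_nhdsWithin, hpos] with k hk hkp
    have hk1 : (1 : ℝ) < k := hk
    filter_upwards [H k hk] with n hn
    have hkk : 0 ≤ k ^ 2 - 1 := by nlinarith
    have hpp : 0 < k + (k ^ 2 - 1) * 3 * m := by positivity
    refine ⟨?_, ?_⟩
    · rw [div_le_iff₀ hpp]; linarith [hn.2]
    · rw [le_div_iff₀ hkp]; linarith [hn.1]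

lemma vol_compare {A B : Set E2} {k : ℝ} (hk : 1 < k) (hoA : IsOpen A)
    (hbB : Bornology.IsBounded B) (hAB : ∀ x ∈ A, k⁻¹ • x ∈ B) :
    (volume A).toReal ≤ k ^ 2 * (volume B).toReal := by
  have hk0 : 0 < k := by linarith
  have hsub : (fun x : E2 => 0 + k • x) ⁻¹' A ⊆ B := by
    intro x hx
    simpa [smul_smul, inv_mul_cancel₀ hk0.ne'] using hAB _ hx
  have h := ENNReal.toReal_mono hbB.measure_lt_top.ne (measure_mono (μ := volume) hsub)
  rw [volume_affine 0 hk0 hoA.measurableSet, inv_mul_le_iff₀ (by positivity)] at h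
  exact h

lemma dEig_compare {A B : Set E2} {k : ℝ} (hk : 1 < k) (hoA : IsOpen A) (hne : A.Nonempty)
    (hAB : ∀ x ∈ A, k⁻¹ • x ∈ B) : dEig1 B ≤ k ^ 2 * dEig1 A := by
  have hk0 : 0 < k := by linarith
  have hsub : (fun x : E2 => 0 + k • x) ⁻¹' A ⊆ B := by
    intro x hx
    simpa [smul_smul, inv_mul_cancel₀ hk0.ne'] using hAB _ hx
  rw [← dEig1_affine 0 hk0 hne hoA]
  exact dEig1_mono (affine_nonempty 0 hk0 hne) (affine_isOpen 0 k hoA) hsub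

/-- The convex Blaschke–Santaló diagram `𝓔ᶜ` is a closed subset of `ℝ²`. -/
theorem diagEC_isClosed : IsClosed diagEC := by
  apply IsSeqClosed.isClosed
  intro p q hp hpq
  have hp1 : Tendsto (fun n => (p n).1) atTop (nhds q.1) := (continuous_fst.tendsto q).comp hpq
  have hp2 : Tendsto (fun n => (p n).2) atTop (nhds q.2) := (continuous_snd.tendsto q).comp hpq
  obtain ⟨M₀, hM₀⟩ := hp1.bddAbove_range
  set M := max M₀ 1 with hM
  have hMpos : 0 < M := lt_of_lt_of_le one_pos (le_max_right _ _)
  have hnorm : ∀ n, ∃ Ω' : Set E2, IsOpen Ω' ∧ Convex ℝ Ω' ∧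
      Metric.ball 0 (kap / (192 * M)) ⊆ Ω' ∧ Ω' ⊆ Metric.closedBall 0 3 ∧
      (volume Ω').toReal * dEig1 Ω' = (p n).1 ∧ (volume Ω').toReal * nEig1 Ω' = (p n).2 := by
    intro n
    obtain ⟨Ω, hne, ho, hb, hc, he⟩ := hp n
    have hF : (volume Ω).toReal * dEig1 Ω ≤ M := by
      have : (p n).1 ≤ M₀ := hM₀ ⟨n, rfl⟩
      rw [he] at this
      exact this.trans (le_max_left _ _)
    obtain ⟨Ω', h1, h2, h3, h4, h5, h6⟩ := normalize_shape hMpos hne ho hb hc hF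
    exact ⟨Ω', h1, h2, h3, h4, by rw [h5, he], by rw [h6, he]⟩
  choose A hA hc hin hout hF hG using hnorm
  have hr : 0 < kap / (192 * M) := div_pos kap_pos (by positivity)
  have h0 : ∀ n, (0 : E2) ∈ A n := fun n => hin n (Metric.mem_ball_self hr)
  have hbA : ∀ n, Bornology.IsBounded (A n) := fun n => Metric.isBounded_closedBall.subset (hout n)
  let U : Ultrafilter ℕ := Ultrafilter.of atTop
  have hU : (U : Filter ℕ) ≤ atTop := Ultrafilter.of_le atTop
  obtain ⟨Ω, hΩo, hΩc, hΩ0, hΩout, hlim⟩ := limit_shape hr A hA hc hin hout U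
  have hbΩ : Bornology.IsBounded Ω := Metric.isBounded_closedBall.subset hΩout
  have tv : Tendsto (fun n => (volume (A n)).toReal) U (nhds (volume Ω).toReal) :=
    squeeze_sq fun k hk => by
      filter_upwards [hlim k hk] with n hn
      exact ⟨vol_compare hk hΩo (hbA n) hn.1, vol_compare hk (hA n) hbΩ hn.2⟩
  have td : Tendsto (fun n => dEig1 (A n)) U (nhds (dEig1 Ω)) :=
    squeeze_sq fun k hk => by
      filter_upwards [hlim k hk] with n hn
      exact ⟨dEig_compare hk (hA n) ⟨0, h0 n⟩ hn.2, dEig_compare hk hΩo ⟨0, hΩ0⟩ hn.1⟩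
  have tn' : Tendsto (fun n => √(nEig1 (A n))) U (nhds (√(nEig1 Ω))) :=
    squeeze_n (Real.sqrt_nonneg _) fun k hk => by
      filter_upwards [hlim k hk] with n hn
      exact ⟨nEig_compare' hk.le (hA n) ⟨0, h0 n⟩ (hbA n) hΩo hΩc hΩ0 hΩout hn.2 hn.1,
        nEig_compare' hk.le hΩo ⟨0, hΩ0⟩ hbΩ (hA n) (hc n) (h0 n) (hout n) hn.1 hn.2⟩
  have tn : Tendsto (fun n => nEig1 (A n)) U (nhds (nEig1 Ω)) := by
    have := tn'.pow 2
    simpa only [Real.sq_sqrt (nEig1_nonneg _)] using this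
  refine ⟨Ω, ⟨0, hΩ0⟩, hΩo, hbΩ, hΩc, ?_⟩
  have e1 : q.1 = (volume Ω).toReal * dEig1 Ω := by
    refine tendsto_nhds_unique (hp1.mono_left hU) ?_
    simpa only [hF] using tv.mul td
  have e2 : q.2 = (volume Ω).toReal * nEig1 Ω := by
    refine tendsto_nhds_unique (hp2.mono_left hU) ?_
    simpa only [hG] using tv.mul tn
  exact Prod.ext e1 e2
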